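/- Assume V ∈ C¹(ℝ^N) satisfies (V1) and (V2) and that ∇V is locally Lipschitz continuous on ℝ^N. Let c_dw ∈ (0, ν₀) be as in the double-well separation property, let c_n ∈ (0, c_dw) with c_n → 0⁺, and for each n let q_n be a C² solution of q̈ = ∇V(q) on ℝ with ½|q̇_n(t)|² − V(q_n(t)) = −c_n for all t, admitting a connecting time interval (α_n, ω_n) (−∞ ≤ α_n < ω_n ≤ +∞) such that: V(q_n(t)) > c_n on (α_n, ω_n); dist(q_n(t), 𝒱^{c_n}₋) → 0 as t → α_n⁺, and if α_n > −∞ then q̇_n(α_n) = 0, V(q_n(α_n)) = c_n and q_n(α_n) ∈ 𝒱^{c_n}₋; dist(q_n(t), 𝒱^{c_n}₊) → 0 as t → ω_n⁻, and if ω_n < +∞ then q̇_n(ω_n) = 0, V(q_n(ω_n)) = c_n and q_n(ω_n) ∈ 𝒱^{c_n}₊; J_{c_n,(α_n,ω_n)}(q_n) = m_{c_n}; and ‖q_n‖_{L^∞(ℝ)} = ‖q_n‖_{L^∞((α_n,ω_n))}. Then there exist real translations ζ_n and a subsequence along which q_n(· − ζ_n) → q₀ in C²_loc(ℝ, ℝ^N),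 where q₀ is a heteroclinic solution between a₋ and a₊: q̈₀ = ∇V(q₀) on ℝ, q₀(t) → a₋ and q̇₀(t) → 0 as t → −∞, and q₀(t) → a₊ and q̇₀(t) → 0 as t → +∞. -/

import Mathlib

open MeasureTheory Filter Metric Set Topology
open scoped ENNReal

noncomputable section

/-- Euclidean space `ℝ^N`. -/
abbrev Euc (N : ℕ) := EuclideanSpace ℝ (Fin N)

/-- Distance between two subsets of a metric space. -/
def setDist {E : Type*} [PseudoMetricSpace E] (A B : Set E) : ℝ :=
  sInf ((fun p : E × E => dist p.1 p.2) '' (A ×ˢ B))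

/-- `q ∈ H¹_loc(ℝ, ℝ^N)` with derivative `q'`: `q` is locally absolutely continuous with
locally square-integrable derivative `q'`. -/
def IsH1loc {N : ℕ} (q q' : ℝ → Euc N) : Prop :=
  LocallyIntegrable q' volume ∧
  (∀ a b : ℝ, IntegrableOn (fun t => ‖q' t‖ ^ 2) (Icc a b) volume) ∧
  (∀ a b : ℝ, q b - q a = ∫ t in a..b, q' t)

/-- The action `J_{c,I}(q) = ∫_I (½|q̇(t)|² + (V(q(t)) − c)) dt`, valued in `[0,+∞]`. -/
def lagJ {N : ℕ} (V : Euc N → ℝ) (c : ℝ) (q q' : ℝ → Euc N) (I : Set ℝ) : ℝ≥0∞ :=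
  ∫⁻ t in I, ENNReal.ofReal (2⁻¹ * ‖q' t‖ ^ 2 + (V (q t) - c))

/-- The admissible class `Γ_c` of pairs (function, derivative): `q ∈ H¹_loc`,
`V(q(t)) ≥ c` for all `t`, `liminf_{t→−∞} dist(q(t),𝒱⁻) = 0` and
`liminf_{t→+∞} dist(q(t),𝒱⁺) = 0`. -/
def Gamma {N : ℕ} (V : Euc N → ℝ) (c : ℝ) (Vm Vp : Set (Euc N)) :
    Set ((ℝ → Euc N) × (ℝ → Euc N)) :=
  {p | IsH1loc p.1 p.2 ∧ (∀ t, c ≤ V (p.1 t)) ∧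
    (∀ ε > 0, ∃ᶠ t in atBot, infDist (p.1 t) Vm < ε) ∧
    (∀ ε > 0, ∃ᶠ t in atTop, infDist (p.1 t) Vp < ε)}

/-- `m_c := inf_{q ∈ Γ_c} J_c(q)`. -/
def mc {N : ℕ} (V : Euc N → ℝ) (c : ℝ) (Vm Vp : Set (Euc N)) : ℝ≥0∞ :=
  ⨅ (p) (_ : p ∈ Gamma V c Vm Vp), lagJ V c p.1 p.2 univ

/-- Coercivity condition (1.7) for the constant `R`. -/
def Coercive {N : ℕ} (V : Euc N → ℝ) (c : ℝ) (Vm Vp : Set (Euc N)) (R : ℝ) : Prop :=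
  mc V c Vm Vp =
    ⨅ (p) (_ : p ∈ Gamma V c Vm Vp) (_ : ∀ t, ‖p.1 t‖ ≤ R), lagJ V c p.1 p.2 univ

/-- Last exit time of a sublevel. -/
lemma last_exit {f : ℝ → ℝ} (hf : Continuous f) {a b r : ℝ} (hab : a ≤ b) (ha : f a ≤ r) :
    ∃ s ∈ Icc a b, f s ≤ r ∧ ∀ t, s < t → t ≤ b → r < f t := by
  have hK : IsCompact (Icc a b ∩ {t | f t ≤ r}) :=
    isCompact_Icc.inter_right (isClosed_le hf continuous_const)
  obtain ⟨s, hs, hs'⟩ := hK.exists_isGreatest ⟨a, ⟨le_rfl, hab⟩, ha⟩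
  refine ⟨s, hs.1, hs.2, fun t hst htb => ?_⟩
  by_contra h
  exact absurd (hs' ⟨⟨hs.1.1.trans hst.le, htb⟩, not_lt.1 h⟩) (not_le.2 hst)

lemma isH1loc_of_C1 {N : ℕ} {q q' : ℝ → Euc N} (h : ∀ t, HasDerivAt q (q' t) t)
    (hc : Continuous q') : IsH1loc q q' := by
  refine ⟨hc.locallyIntegrable, fun a b => ?_, fun a b => ?_⟩
  · exact (hc.norm.pow 2).continuousOn.integrableOn_Icc
  · rw [intervalIntegral.integral_eq_sub_of_hasDerivAt (fun x _ => h x)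
      (hc.intervalIntegrable a b)]

/-- Gluing of two curves at time `s`. -/
def glue {N : ℕ} (s : ℝ) (f g : ℝ → Euc N) : ℝ → Euc N := fun t => if t ≤ s then f t else g t

lemma isH1loc_glue {N : ℕ} {f f' g g' : ℝ → Euc N} {s : ℝ} (hf : IsH1loc f f')
    (hg : IsH1loc g g') (h : f s = g s) : IsH1loc (glue s f g) (glue s f' g') := by
  classical
  have hli : LocallyIntegrable (glue s f' g') volume := by
    have e : glue s f' g' = (Iic s).indicator f' + (Iic s)ᶜ.indicator g' := by
      ext1 t
      by_cases ht : t ≤ s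
      · simp [glue, ht]
      · have ht' := not_le.1 ht
        simp [glue, ht, ht']
    rw [e]
    exact (hf.1.indicator measurableSet_Iic).add (hg.1.indicator measurableSet_Iic.compl)
  refine ⟨hli, fun a b => ?_, ?_⟩
  · have e : (fun t => ‖glue s f' g' t‖ ^ 2) = (Iic s).indicator (fun t => ‖f' t‖ ^ 2)
        + (Iic s)ᶜ.indicator (fun t => ‖g' t‖ ^ 2) := by
      ext1 t
      by_cases ht : t ≤ s
      · simp [glue, ht]
      · have ht' := not_le.1 ht
        simp [glue, ht, ht']
    rw [e]
    exact ((hf.2.1 a b).indicator measurableSet_Iic).add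
      ((hg.2.1 a b).indicator measurableSet_Iic.compl)
  · have key : ∀ b, glue s f g b - glue s f g s = ∫ t in s..b, glue s f' g' t := by
      intro b
      rcases le_or_gt b s with hb | hb
      · have : ∫ t in s..b, glue s f' g' t = ∫ t in s..b, f' t := by
          apply intervalIntegral.integral_congr
          intro t ht
          rw [uIcc_of_ge hb] at ht
          simp [glue, ht.2]
        rw [this, ← hf.2.2 s b]
        simp [glue, hb]
      · have : ∫ t in s..b, glue s f' g' t = ∫ t in s..b, g' t := by
          apply intervalIntegral.integral_congr_ae
          refine Eventually.of_forall fun t ht => ?_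
          rw [uIoc_of_le hb.le] at ht
          simp [glue, ht.1]
        rw [this, ← hg.2.2 s b]
        simp [glue, hb, h]
    intro a b
    have hi : ∀ a b, IntervalIntegrable (glue s f' g') volume a b := fun a b =>
      (hli.integrableOn_isCompact isCompact_uIcc).intervalIntegrable
    rw [← intervalIntegral.integral_add_adjacent_intervals (hi a s) (hi s b), ← key b,
      intervalIntegral.integral_symm, ← key a]
    abel

lemma lagJ_glue {N : ℕ} (V : Euc N → ℝ) (c s : ℝ) (f f' g g' : ℝ → Euc N) (I : Set ℝ) :
    lagJ V c (glue s f g) (glue s f' g') I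
      ≤ lagJ V c f f' (I ∩ Iic s) + lagJ V c g g' (I ∩ Ioi s) := by
  unfold lagJ
  rw [← lintegral_inter_add_sdiff _ I (measurableSet_Iic (a := s))]
  have e : I \ Iic s = I ∩ Ioi s := by ext; simp
  rw [e]
  refine add_le_add (le_of_eq ?_) (le_of_eq ?_)
  · rw [Set.inter_comm, ← Measure.restrict_restrict measurableSet_Iic]
    refine setLIntegral_congr_fun measurableSet_Iic fun t ht => ?_
    simp only [mem_Iic] at ht
    simp [glue, ht]
  · rw [Set.inter_comm, ← Measure.restrict_restrict measurableSet_Ioi]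
    refine setLIntegral_congr_fun measurableSet_Ioi fun t ht => ?_
    simp only [mem_Ioi] at ht
    simp [glue, not_le.2 ht]

/-- Arzela-Ascoli on the real line for equi-Lipschitz, equibounded sequences. -/
lemma ascoli_seq {F : Type*} [NormedAddCommGroup F] [ProperSpace F] (K : NNReal) (R : ℝ)
    (f : ℕ → ℝ → F) (hL : ∀ n, LipschitzWith K (f n)) (hR : ∀ n t, ‖f n t‖ ≤ R) :
    ∃ φ : ℕ → ℕ, StrictMono φ ∧ ∃ g : ℝ → F, TendstoLocallyUniformly (fun n => f (φ n)) g atTop := by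
  let S : Set C(ℝ, F) := {u | LipschitzWith K u ∧ ∀ t, u t ∈ closedBall (0 : F) R}
  have himg : ContinuousMap.toFun '' S =
      {u : ℝ → F | LipschitzWith K u} ∩ Set.pi univ (fun _ => closedBall (0 : F) R) := by
    ext u
    constructor
    · rintro ⟨v, hv, rfl⟩
      exact ⟨hv.1, fun t _ => hv.2 t⟩
    · rintro ⟨h1, h2⟩
      exact ⟨⟨u, LipschitzWith.continuous h1⟩, ⟨h1, fun t => h2 t trivial⟩, rfl⟩
  have hS : IsCompact S := by
    apply ArzelaAscoli.isCompact_of_equicontinuous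
    · rw [himg]
      refine (isCompact_univ_pi fun _ => isCompact_closedBall _ _).inter_left ?_
      have : {u : ℝ → F | LipschitzWith K u} = ⋂ x, ⋂ y, {u | dist (u x) (u y) ≤ K * dist x y} := by
        ext u
        simp [lipschitzWith_iff_dist_le_mul]
      rw [this]
      refine isClosed_iInter fun x => isClosed_iInter fun y => isClosed_le ?_ continuous_const
      exact (continuous_apply x).dist (continuous_apply y)
    · exact (LipschitzWith.uniformEquicontinuous _ K fun u => u.2.1).equicontinuous
  have hseq := hS.isSeqCompact
  obtain ⟨g, -, φ, hφ, hg⟩ := hseq (x := fun n => ⟨f n, (hL n).continuous⟩)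
    (fun n => ⟨hL n, fun t => by simpa using hR n t⟩)
  refine ⟨φ, hφ, g, ?_⟩
  exact ContinuousMap.tendsto_iff_tendstoLocallyUniformly.1 hg

/-- Barbalat type lemma. -/
lemma barbalat {h : ℝ → ℝ} {L M : ℝ} (hpos : ∀ t, 0 ≤ h t)
    (hL : ∀ s t, |h s - h t| ≤ L * |s - t|) (hc : Continuous h)
    (hM : ∀ T, 0 ≤ T → ∫ t in (0 : ℝ)..T, h t ≤ M) : Tendsto h atTop (𝓝 0) := by
  have hL0 : 0 ≤ L := by
    have := hL 0 1
    have h2 := abs_nonneg (h 0 - h 1)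
    norm_num at this
    linarith
  set g : ℝ → ℝ := fun T => ∫ t in (0 : ℝ)..T, h t with hg
  have hi : ∀ a b, IntervalIntegrable h volume a b := fun a b => hc.intervalIntegrable a b
  have hsub : ∀ a b, g b - g a = ∫ t in a..b, h t := by
    intro a b
    simp only [hg]
    rw [← intervalIntegral.integral_add_adjacent_intervals (hi 0 a) (hi a b)]
    ring
  have hmono : Monotone g := by
    intro a b hab
    have := intervalIntegral.integral_nonneg (μ := volume) hab (fun u _ => hpos u)
    rw [← hsub] at this
    linarith
  have hbdd : BddAbove (range g) := by
    refine ⟨M, ?_⟩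
    rintro _ ⟨T, rfl⟩
    exact (hmono (le_max_left T 0)).trans (hM _ (le_max_right _ _))
  have hlim := tendsto_atTop_ciSup hmono hbdd
  rw [Metric.tendsto_atTop]
  intro ε hε
  set δ : ℝ := ε / (2 * (L + 1)) with hδ
  have hδ0 : 0 < δ := by positivity
  have hLδ : L * δ ≤ ε / 2 := by
    have : (L + 1) * δ = ε / 2 := by rw [hδ]; field_simp
    nlinarith
  have h2 : Tendsto (fun T => g (T + δ) - g T) atTop (𝓝 0) := by
    have := (hlim.comp (tendsto_atTop_add_const_right atTop δ tendsto_id)).sub hlim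
    simpa using this
  obtain ⟨T, hT⟩ := Metric.tendsto_atTop.1 h2 (ε / 2 * δ) (by positivity)
  refine ⟨T, fun t ht => ?_⟩
  have h3 := hT t ht
  rw [Real.dist_0_eq_abs] at h3 ⊢
  rw [abs_of_nonneg (hpos t)]
  have h3' := (abs_lt.1 h3).2
  rw [hsub] at h3'
  have h4 : ∫ _u in t..(t + δ), (h t - L * δ) ≤ ∫ u in t..(t + δ), h u := by
    refine intervalIntegral.integral_mono_on (by linarith) (by simp) (hi _ _) fun u hu => ?_
    have h5 := (abs_le.1 (hL u t)).1
    rw [abs_of_nonneg (by linarith [hu.1])] at h5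
    have : L * (u - t) ≤ L * δ := mul_le_mul_of_nonneg_left (by linarith [hu.2]) hL0
    linarith
  rw [intervalIntegral.integral_const] at h4
  simp only [add_sub_cancel_left, smul_eq_mul] at h4
  have : δ * (h t - L * δ) < δ * (ε / 2) := by linarith
  have := lt_of_mul_lt_mul_left this hδ0.le
  linarith

lemma lagJ_split {N : ℕ} (V : Euc N → ℝ) (c s : ℝ) (f f' : ℝ → Euc N) (I : Set ℝ) :
    lagJ V c f f' I = lagJ V c f f' (I ∩ Iic s) + lagJ V c f f' (I ∩ Ioi s) := by
  unfold lagJ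
  rw [← lintegral_inter_add_sdiff _ I (measurableSet_Iic (a := s))]
  have e : I \ Iic s = I ∩ Ioi s := by ext; simp
  rw [e]

lemma lagJ_mono {N : ℕ} (V : Euc N → ℝ) (c : ℝ) (f f' : ℝ → Euc N) {I I' : Set ℝ} (h : I ⊆ I') :
    lagJ V c f f' I ≤ lagJ V c f f' I' :=
  lintegral_mono_set h

lemma lagJ_const {N : ℕ} (V : Euc N → ℝ) {c : ℝ} {x : Euc N} (hx : V x ≤ c) (I : Set ℝ) :
    lagJ V c (fun _ => x) (fun _ => 0) I = 0 := by
  have : ENNReal.ofReal (V x - c) = 0 := ENNReal.ofReal_of_nonpos (by linarith)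
  simp [lagJ, this]

lemma ofReal_integral_le_lagJ {N : ℕ} {V : Euc N → ℝ} (hV : Continuous V) {c : ℝ}
    {q q' : ℝ → Euc N} (hq : Continuous q) (hq' : Continuous q') {s t : ℝ} (hst : s ≤ t)
    (h : ∀ u ∈ Ioc s t, c ≤ V (q u)) :
    ENNReal.ofReal (∫ u in s..t, (2⁻¹ * ‖q' u‖ ^ 2 + (V (q u) - c)))
      ≤ lagJ V c q q' (Ioc s t) := by
  have hcont : Continuous (fun u => 2⁻¹ * ‖q' u‖ ^ 2 + (V (q u) - c)) := by fun_prop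
  rw [intervalIntegral.integral_of_le hst, ofReal_integral_eq_lintegral_ofReal]
  · exact le_rfl
  · exact (hcont.integrableOn_Icc (a := s) (b := t)).mono_set Ioc_subset_Icc_self
  · refine (ae_restrict_iff' measurableSet_Ioc).2 (Eventually.of_forall fun u hu => ?_)
    have := h u hu
    have h2 : (0:ℝ) ≤ V (q u) - c := by linarith
    simp only [Pi.zero_apply]
    positivity

lemma right_path {N : ℕ} {V : Euc N → ℝ} (hV : Continuous V) {c : ℝ} (hc : 0 ≤ c)
    {Vm Vp : Set (Euc N)} (hVp : IsClosed Vp) (hset : {x | V x ≤ c} = Vm ∪ Vp)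
    {x ap : Euc N} (hap : ap ∈ Vp) (hx : c ≤ V x)
    (hdisj : ∀ θ ∈ Ioc (0 : ℝ) 1, x + θ • (ap - x) ∉ Vm) {D K : ℝ} (hD : ‖ap - x‖ ≤ D)
    (hK : ∀ θ ∈ Icc (0 : ℝ) 1, V (x + θ • (ap - x)) ≤ K) (s : ℝ) :
    ∃ g g' : ℝ → Euc N, IsH1loc g g' ∧ g s = x ∧ (∀ t, s ≤ t → c ≤ V (g t)) ∧
      (∀ᶠ t in atTop, g t ∈ Vp) ∧
      lagJ V c g g' (Ioi s) ≤ ENNReal.ofReal (2⁻¹ * D ^ 2 + K) := by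
  have hD0 : 0 ≤ D := (norm_nonneg _).trans hD
  set γ : ℝ → Euc N := fun θ => x + θ • (ap - x) with hγ
  have hγc : Continuous γ := by fun_prop
  have hKc : IsCompact (Icc (0:ℝ) 1 ∩ γ ⁻¹' Vp) := isCompact_Icc.inter_right (hVp.preimage hγc)
  obtain ⟨τ, hτ, hτ'⟩ := hKc.exists_isLeast ⟨1, by simp, by simpa [hγ] using hap⟩
  have hlt : ∀ θ, 0 < θ → θ < τ → c < V (γ θ) := by
    intro θ h0 h1
    by_contra h
    have : γ θ ∈ {x | V x ≤ c} := not_lt.1 h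
    rw [hset] at this
    rcases this with h2 | h2
    · exact hdisj θ ⟨h0, h1.le.trans hτ.1.2⟩ h2
    · exact absurd (hτ' ⟨⟨h0.le, h1.le.trans hτ.1.2⟩, h2⟩) (not_le.2 h1)
  have hτle : V (γ τ) ≤ c := by
    have : γ τ ∈ {x | V x ≤ c} := by rw [hset]; exact Or.inr hτ.2
    exact this
  have hτge : c ≤ V (γ τ) := by
    rcases eq_or_lt_of_le hτ.1.1 with h | h
    · rw [← h]; simpa [hγ] using hx
    · have : Tendsto (fun θ => V (γ θ)) (𝓝[<] τ) (𝓝 (V (γ τ))) :=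
        ((hV.comp hγc).tendsto τ).mono_left nhdsWithin_le_nhds
      refine ge_of_tendsto this ?_
      filter_upwards [Ioo_mem_nhdsLT h] with θ hθ
      exact (hlt θ hθ.1 hθ.2).le
  have hge : ∀ θ, 0 ≤ θ → θ ≤ τ → c ≤ V (γ θ) := by
    intro θ h0 h1
    rcases eq_or_lt_of_le h0 with h | h
    · rw [← h]; simpa [hγ] using hx
    rcases eq_or_lt_of_le h1 with h' | h'
    · rw [h']; exact hτge
    · exact (hlt θ h h').le
  refine ⟨glue (s + τ) (fun t => γ (t - s)) (fun _ => γ τ),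
    glue (s + τ) (fun _ => ap - x) (fun _ => 0), ?_, ?_, ?_, ?_, ?_⟩
  · apply isH1loc_glue
    · apply isH1loc_of_C1 _ continuous_const
      intro t
      simpa [hγ] using
        (((hasDerivAt_id t).sub_const s).smul_const (ap - x)).const_add x
    · exact isH1loc_of_C1 (fun t => hasDerivAt_const t _) continuous_const
    · simp
  · simp [glue, hτ.1.1, hγ]
  · intro t ht
    by_cases h : t ≤ s + τ
    · simp only [glue, h, if_true]
      exact hge _ (by linarith) (by linarith)
    · simp only [glue, h, if_false]
      exact hτge
  · filter_upwards [eventually_gt_atTop (s + τ)] with t ht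
    simp only [glue, not_le.2 ht, if_false]
    exact hτ.2
  · refine (lagJ_glue _ _ _ _ _ _ _ _).trans ?_
    rw [lagJ_const V hτle, add_zero]
    have hsub : Ioi s ∩ Iic (s + τ) = Ioc s (s + τ) := rfl
    rw [hsub]
    unfold lagJ
    calc ∫⁻ t in Ioc s (s + τ), ENNReal.ofReal (2⁻¹ * ‖ap - x‖ ^ 2 + (V (γ (t - s)) - c))
        ≤ ∫⁻ t in Ioc s (s + τ), ENNReal.ofReal (2⁻¹ * D ^ 2 + K) := by
          refine setLIntegral_mono' measurableSet_Ioc fun t ht => ENNReal.ofReal_le_ofReal ?_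
          have h1 : V (γ (t - s)) ≤ K :=
            hK (t - s) ⟨by linarith [ht.1], by linarith [ht.2, hτ.1.2]⟩
          have h2 : ‖ap - x‖ ^ 2 ≤ D ^ 2 := by gcongr
          linarith
      _ = ENNReal.ofReal (2⁻¹ * D ^ 2 + K) * ENNReal.ofReal τ := by
          rw [setLIntegral_const, Real.volume_Ioc]; simp
      _ ≤ ENNReal.ofReal (2⁻¹ * D ^ 2 + K) * 1 := by
          gcongr
          rw [← ENNReal.ofReal_one]
          exact ENNReal.ofReal_le_ofReal hτ.1.2
      _ = _ := mul_one _

lemma left_path {N : ℕ} {V : Euc N → ℝ} {c : ℝ} {Vm : Set (Euc N)} {q q' : ℝ → Euc N}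
    (hq : ∀ t, HasDerivAt q (q' t) t) (hq' : Continuous q') {α : EReal} {s : ℝ}
    (hαs : α < (s : EReal)) (hVq : ∀ t : ℝ, α < (t : EReal) → t ≤ s → c ≤ V (q t))
    (hbot : α = ⊥ → Tendsto (fun t => infDist (q t) Vm) atBot (𝓝 0))
    (hfin : ∀ a : ℝ, α = (a : EReal) → V (q a) = c ∧ q a ∈ Vm) :
    ∃ f f' : ℝ → Euc N, IsH1loc f f' ∧ f s = q s ∧ (∀ t, t ≤ s → c ≤ V (f t)) ∧
      (∀ ε > 0, ∃ᶠ t in atBot, infDist (f t) Vm < ε) ∧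
      lagJ V c f f' (Iic s) ≤ lagJ V c q q' {t : ℝ | α < (t : EReal) ∧ t ≤ s} := by
  induction α with
  | bot =>
    refine ⟨q, q', isH1loc_of_C1 hq hq', rfl, fun t ht => hVq t (EReal.bot_lt_coe t) ht, ?_, ?_⟩
    · intro ε hε
      exact ((hbot rfl).eventually_lt_const hε).frequently
    · exact lagJ_mono _ _ _ _ fun t ht => ⟨EReal.bot_lt_coe t, ht⟩
  | top => exact absurd hαs (by simp)
  | coe a =>
    have has : a < s := by exact_mod_cast hαs
    obtain ⟨h1, h2⟩ := hfin a rfl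
    refine ⟨glue a (fun _ => q a) q, glue a (fun _ => 0) q', ?_, ?_, ?_, ?_, ?_⟩
    · exact isH1loc_glue (isH1loc_of_C1 (fun t => hasDerivAt_const t _) continuous_const)
        (isH1loc_of_C1 hq hq') rfl
    · simp [glue, has]
    · intro t ht
      by_cases h : t ≤ a
      · simp [glue, h, h1]
      · simp only [glue, h, if_false]
        exact hVq t (by exact_mod_cast not_le.1 h) ht
    · intro ε hε
      refine Eventually.frequently ?_
      filter_upwards [eventually_le_atBot a] with t ht
      simpa [glue, ht, infDist_zero_of_mem h2] using hε
    · refine (lagJ_glue _ _ _ _ _ _ _ _).trans ?_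
      rw [lagJ_const V h1.le, zero_add]
      exact lagJ_mono _ _ _ _ fun t ht => ⟨by exact_mod_cast ht.2, ht.1⟩

lemma mc_le_glue {N : ℕ} {V : Euc N → ℝ} {c : ℝ} {Vm Vp : Set (Euc N)} {f f' g g' : ℝ → Euc N}
    {s : ℝ} (hf : IsH1loc f f') (hg : IsH1loc g g') (hfg : f s = g s)
    (hVf : ∀ t, t ≤ s → c ≤ V (f t)) (hVg : ∀ t, s ≤ t → c ≤ V (g t))
    (hfm : ∀ ε > 0, ∃ᶠ t in atBot, infDist (f t) Vm < ε) (hgp : ∀ᶠ t in atTop, g t ∈ Vp) :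
    mc V c Vm Vp ≤ lagJ V c f f' (Iic s) + lagJ V c g g' (Ioi s) := by
  have hmem : (glue s f g, glue s f' g') ∈ Gamma V c Vm Vp := by
    refine ⟨isH1loc_glue hf hg hfg, fun t => ?_, fun ε hε => ?_, fun ε hε => ?_⟩
    · by_cases h : t ≤ s
      · simpa [glue, h] using hVf t h
      · simpa [glue, h] using hVg t (not_le.1 h).le
    · refine ((hfm ε hε).and_eventually (eventually_le_atBot s)).mono ?_
      rintro t ⟨h1, h2⟩
      simpa [glue, h2] using h1
    · refine Eventually.frequently ?_
      filter_upwards [hgp, eventually_gt_atTop s] with t h1 h2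
      simpa [glue, not_le.2 h2, infDist_zero_of_mem h1] using hε
  refine (iInf₂_le _ hmem).trans ?_
  have := lagJ_glue V c s f f' g g' univ
  simpa using this

/-- Uniform bound for `m_c`. -/
lemma mc_bound {N : ℕ} {V : Euc N → ℝ} (hV : Continuous V) {c : ℝ} (hc : 0 ≤ c)
    {Vm Vp : Set (Euc N)} {am ap : Euc N} (hVm : IsClosed Vm) (hVp : IsClosed Vp)
    (hset : {x | V x ≤ c} = Vm ∪ Vp) (hne : am ≠ ap)
    (ham : am ∈ Vm) (hbm : Vm ⊆ ball am (dist am ap / 4)) (hap : ap ∈ Vp)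
    (hbp : Vp ⊆ ball ap (dist am ap / 4)) {K : ℝ}
    (hK : ∀ θ ∈ Icc (0 : ℝ) 1, V (am + θ • (ap - am)) ≤ K) :
    mc V c Vm Vp ≤ ENNReal.ofReal (2⁻¹ * ‖ap - am‖ ^ 2 + K) := by
  have hd : 0 < dist am ap := dist_pos.2 hne
  set γ : ℝ → Euc N := fun θ => am + θ • (ap - am) with hγ
  have hγc : Continuous γ := by fun_prop
  have hdis : ∀ y, y ∈ ball am (dist am ap / 4) → y ∉ Vp := by
    intro y h1 h2
    have h2' := hbp h2
    rw [mem_ball] at h1 h2'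
    have := dist_triangle_left am ap y
    linarith
  obtain ⟨s, hs, hs1, hs2⟩ := last_exit (f := fun θ => infDist (γ θ) Vm)
    ((continuous_infDist_pt Vm).comp hγc) (a := 0) (b := 1) (r := 0) zero_le_one
    (by simp [hγ, infDist_zero_of_mem ham])
  have hne' : Vm.Nonempty := ⟨am, ham⟩
  have hsm : γ s ∈ Vm := (hVm.mem_iff_infDist_zero hne').2 (le_antisymm hs1 infDist_nonneg)
  have hout : ∀ t, s < t → t ≤ 1 → γ t ∉ Vm := by
    intro t h1 h2 h3
    have := hs2 t h1 h2
    rw [infDist_zero_of_mem h3] at this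
    exact lt_irrefl _ this
  have hs1' : s < 1 := by
    rcases eq_or_lt_of_le hs.2 with h | h
    · exfalso
      rw [h] at hsm
      refine hdis _ (hbm hsm) ?_
      simpa [hγ] using hap
    · exact h
  have hVs : c ≤ V (γ s) := by
    have : Tendsto (fun θ => V (γ θ)) (𝓝[>] s) (𝓝 (V (γ s))) :=
      ((hV.comp hγc).tendsto s).mono_left nhdsWithin_le_nhds
    refine ge_of_tendsto this ?_
    have hb : ∀ᶠ θ in 𝓝[>] s, γ θ ∈ ball am (dist am ap / 4) :=
      (hγc.tendsto s).mono_left nhdsWithin_le_nhds (isOpen_ball.mem_nhds (hbm hsm))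
    filter_upwards [Ioo_mem_nhdsGT hs1', hb] with θ hθ hθb
    by_contra h
    have : γ θ ∈ {x | V x ≤ c} := (not_le.1 h).le
    rw [hset] at this
    rcases this with h2 | h2
    · exact hout θ hθ.1 hθ.2.le h2
    · exact hdis _ hθb h2
  have hVs' : V (γ s) ≤ c := by
    have : γ s ∈ {x | V x ≤ c} := by rw [hset]; exact Or.inl hsm
    exact this
  have hseg : ∀ θ : ℝ, γ s + θ • (ap - γ s) = γ (s + θ * (1 - s)) := by
    intro θ
    simp only [hγ]
    module
  obtain ⟨g, g', hg1, hg2, hg3, hg4, hg5⟩ := right_path hV hc hVp hset hap hVs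
    (fun θ hθ => by
      rw [hseg]
      refine hout _ ?_ ?_
      · have : 0 < θ * (1 - s) := mul_pos hθ.1 (by linarith)
        linarith
      · nlinarith [hθ.1, hθ.2])
    (D := ‖ap - am‖) (K := K)
    (by
      have : ap - γ s = (1 - s) • (ap - am) := by simp only [hγ]; module
      rw [this, norm_smul, Real.norm_eq_abs, abs_of_nonneg (by linarith)]
      have := norm_nonneg (ap - am)
      nlinarith [hs.1])
    (fun θ hθ => by
      rw [hseg]
      refine hK _ ⟨?_, ?_⟩
      · have : 0 ≤ θ * (1 - s) := mul_nonneg hθ.1 (by linarith)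
        linarith [hs.1]
      · nlinarith [hθ.1, hθ.2]) 0
  have := mc_le_glue (V := V) (c := c) (Vm := Vm) (Vp := Vp) (f := fun _ => γ s)
    (f' := fun _ => 0) (s := 0) (isH1loc_of_C1 (fun t => hasDerivAt_const t _) continuous_const)
    hg1 hg2.symm (fun _ _ => hVs) hg3
    (fun ε hε => (Eventually.of_forall fun t => by
      simpa [infDist_zero_of_mem hsm] using hε).frequently) hg4
  rw [lagJ_const V hVs', zero_add] at this
  exact this.trans hg5

/-- Cutting argument: if the minimizer passes close to `ap`, the rest costs little. -/
lemma cut {N : ℕ} {V : Euc N → ℝ} (hV : Continuous V) {c : ℝ} (hc : 0 ≤ c)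
    {Vm Vp : Set (Euc N)} {am ap : Euc N} (hVp : IsClosed Vp)
    (hset : {x | V x ≤ c} = Vm ∪ Vp)
    (hbm : Vm ⊆ ball am (dist am ap / 4)) (hap : ap ∈ Vp)
    {q q' : ℝ → Euc N}
    (hq : ∀ t, HasDerivAt q (q' t) t) (hq' : Continuous q') {α ω : EReal} {s : ℝ}
    (hαs : α < (s : EReal)) (hsω : (s : EReal) < ω)
    (hVq : ∀ t : ℝ, α < (t : EReal) → (t : EReal) < ω → c ≤ V (q t))
    (hbot : α = ⊥ → Tendsto (fun t => infDist (q t) Vm) atBot (𝓝 0))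
    (hfin : ∀ a : ℝ, α = (a : EReal) → V (q a) = c ∧ q a ∈ Vm)
    (hmin : lagJ V c q q' {t : ℝ | α < (t : EReal) ∧ (t : EReal) < ω} ≤ mc V c Vm Vp)
    (hmfin : mc V c Vm Vp ≠ ⊤)
    {r K : ℝ} (hr : r ≤ dist am ap / 2) (hsr : dist (q s) ap ≤ r)
    (hK : ∀ x ∈ closedBall ap r, V x ≤ K) :
    lagJ V c q q' ({t : ℝ | α < (t : EReal) ∧ (t : EReal) < ω} ∩ Ioi s)
      ≤ ENNReal.ofReal (2⁻¹ * r ^ 2 + K) := by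
  have hlt : ∀ t : ℝ, t ≤ s → (t : EReal) < ω := fun t ht =>
    lt_of_le_of_lt (by exact_mod_cast ht) hsω
  obtain ⟨f, f', hf1, hf2, hf3, hf4, hf5⟩ := left_path (V := V) (c := c) hq hq' hαs
    (fun t h1 h2 => hVq t h1 (hlt t h2)) hbot hfin
  have hball : ∀ θ ∈ Icc (0:ℝ) 1, q s + θ • (ap - q s) ∈ closedBall ap r := by
    intro θ hθ
    have e : q s + θ • (ap - q s) - ap = (1 - θ) • (q s - ap) := by module
    rw [mem_closedBall, dist_eq_norm, e, norm_smul, Real.norm_eq_abs,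
      abs_of_nonneg (by linarith [hθ.2])]
    rw [dist_eq_norm] at hsr
    nlinarith [norm_nonneg (q s - ap), hθ.1, hθ.2]
  obtain ⟨g, g', hg1, hg2, hg3, hg4, hg5⟩ := right_path hV hc hVp hset hap (hVq s hαs hsω)
    (fun θ hθ h => by
      have h1 := hball θ ⟨hθ.1.le, hθ.2⟩
      have h2 := hbm h
      rw [mem_closedBall] at h1
      rw [mem_ball] at h2
      have := dist_triangle_left am ap (q s + θ • (ap - q s))
      have h0 : (0:ℝ) ≤ dist (q s + θ • (ap - q s)) am := dist_nonneg
      linarith)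
    (D := r) (K := K) (by rw [← dist_eq_norm, dist_comm]; exact hsr)
    (fun θ hθ => hK _ (hball θ hθ)) s
  have h := mc_le_glue hf1 hg1 (hf2.trans hg2.symm) hf3 hg3 hf4 hg4
  have h' := hmin.trans h
  have hfin1 := ne_top_of_le_ne_top hmfin hmin
  rw [lagJ_split V c s] at h' hfin1
  have e : {t : ℝ | α < (t : EReal) ∧ (t : EReal) < ω} ∩ Iic s
      = {t : ℝ | α < (t : EReal) ∧ t ≤ s} := by
    ext t
    constructor
    · rintro ⟨h1, h2⟩
      exact ⟨h1.1, h2⟩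
    · rintro ⟨h1, h2⟩
      exact ⟨⟨h1, hlt t h2⟩, h2⟩
  rw [e] at h' hfin1
  have h1 : lagJ V c q q' {t : ℝ | α < (t : EReal) ∧ t ≤ s} ≠ ⊤ :=
    fun hh => hfin1 (by rw [hh]; simp)
  exact (ENNReal.add_le_add_iff_left h1).1 (h'.trans (add_le_add hf5 hg5))

lemma sup_bound {N : ℕ} {V : Euc N → ℝ} (hV : Continuous V) {c : ℝ}
    {q q' : ℝ → Euc N}
    (hq : ∀ t, HasDerivAt q (q' t) t) (hq' : Continuous q') {I : Set ℝ} {M h ρ : ℝ}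
    (hM : 0 ≤ M) (hh : 0 < h)
    (hVI : lagJ V c q q' I ≤ ENNReal.ofReal M) (hρ : ∀ x, ρ ≤ ‖x‖ → c + h ≤ V x)
    {t₀ t : ℝ} (htt : t₀ ≤ t) (hI : Icc t₀ t ⊆ I) (h0 : ‖q t₀‖ ≤ ρ) :
    ‖q t‖ ≤ ρ + (1 + 1 / h) * M := by
  have hqc : Continuous q := continuous_iff_continuousAt.2 fun t => (hq t).continuousAt
  obtain ⟨s, hs, hs1, hs2⟩ := last_exit hqc.norm htt h0
  have hcont : Continuous (fun u => 2⁻¹ * ‖q' u‖ ^ 2 + (V (q u) - c)) := by fun_prop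
  have h1 : ENNReal.ofReal (∫ u in s..t, (2⁻¹ * ‖q' u‖ ^ 2 + (V (q u) - c))) ≤
      ENNReal.ofReal M := by
    refine (ofReal_integral_le_lagJ hV hqc hq' hs.2 fun u hu => ?_).trans
      ((lagJ_mono _ _ _ _ ?_).trans hVI)
    · have := hρ (q u) (hs2 u hu.1 hu.2).le
      linarith
    · exact fun u hu => hI ⟨hs.1.trans hu.1.le, hu.2⟩
  have h2 := (ENNReal.ofReal_le_ofReal_iff hM).1 h1
  have h3 : q t - q s = ∫ u in s..t, q' u := by
    rw [intervalIntegral.integral_eq_sub_of_hasDerivAt (fun x _ => hq x)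
      (hq'.intervalIntegrable _ _)]
  have h4 : ‖∫ u in s..t, q' u‖ ≤ ∫ u in s..t, ‖q' u‖ :=
    intervalIntegral.norm_integral_le_integral_norm hs.2
  have h5 : ∫ u in s..t, ‖q' u‖ ≤
      ∫ u in s..t, (1 + 1 / h) * (2⁻¹ * ‖q' u‖ ^ 2 + (V (q u) - c)) := by
    refine intervalIntegral.integral_mono_on_of_le_Ioo hs.2 (hq'.norm.intervalIntegrable _ _)
      ((hcont.const_mul _).intervalIntegrable _ _) fun u hu => ?_
    have hVu := hρ (q u) (hs2 u hu.1 hu.2.le).le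
    set v := ‖q' u‖
    set w := V (q u) - c with hw
    have hwh : h ≤ w := by linarith
    have e1 : 1 ≤ 1 / h * w := by
      rw [one_div, inv_mul_eq_div, le_div_iff₀ hh]; linarith
    have e2 : 0 ≤ 1 / h * (2⁻¹ * v ^ 2) := by positivity
    nlinarith [sq_nonneg (v - 1)]
  rw [intervalIntegral.integral_const_mul] at h5
  have h6 : (1 + 1 / h) * ∫ u in s..t, (2⁻¹ * ‖q' u‖ ^ 2 + (V (q u) - c)) ≤ (1 + 1 / h) * M :=
    mul_le_mul_of_nonneg_left h2 (by positivity)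
  have h7 : ‖q t‖ ≤ ‖q s‖ + ‖q t - q s‖ := by
    have := norm_add_le (q s) (q t - q s)
    simpa using this
  rw [h3] at h7
  linarith

lemma near_wells {N : ℕ} {V : Euc N → ℝ} (hV : Continuous V) {am ap : Euc N}
    (hVpos : ∀ x, x ≠ am → x ≠ ap → 0 < V x) (R : ℝ) {ε : ℝ} (hε : 0 < ε) :
    ∃ δ > 0, ∀ x, ‖x‖ ≤ R → V x < δ → dist x am < ε ∨ dist x ap < ε := by
  have hK : IsCompact (closedBall (0 : Euc N) R ∩ ({x | ε ≤ dist x am} ∩ {x | ε ≤ dist x ap})) :=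
    (isCompact_closedBall _ _).inter_right
      ((isClosed_le (by fun_prop) (by fun_prop)).inter (isClosed_le (by fun_prop) (by fun_prop)))
  rcases (closedBall (0 : Euc N) R ∩ ({x | ε ≤ dist x am} ∩ {x | ε ≤ dist x ap})).eq_empty_or_nonempty
    with h | h
  · refine ⟨1, one_pos, fun x hx _ => ?_⟩
    by_contra hcon
    push Not at hcon
    have : x ∈ (∅ : Set (Euc N)) := by
      rw [← h]
      exact ⟨by simpa using hx, hcon.1, hcon.2⟩
    exact this
  · obtain ⟨y, hy, hmin⟩ := hK.exists_isMinOn h hV.continuousOn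
    refine ⟨V y, hVpos y ?_ ?_, fun x hx hxV => ?_⟩
    · rintro rfl
      have := hy.2.1
      simp only [mem_ofPred_eq, dist_self] at this
      linarith
    · rintro rfl
      have := hy.2.2
      simp only [mem_ofPred_eq, dist_self] at this
      linarith
    · by_contra hcon
      push Not at hcon
      have := hmin (show x ∈ _ from ⟨by simpa using hx, hcon.1, hcon.2⟩)
      simp only [mem_ofPred_eq] at this
      linarith

lemma to_well {N : ℕ} {V : Euc N → ℝ} (hV : Continuous V) {am ap : Euc N}
    (hVpos : ∀ x, x ≠ am → x ≠ ap → 0 < V x) {R r : ℝ} (hr : 0 < r) {f : ℝ → Euc N}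
    {l : Filter ℝ} (hR : ∀ t, ‖f t‖ ≤ R) (h0 : Tendsto (fun t => V (f t)) l (𝓝 0))
    (hfar : ∀ᶠ t in l, r ≤ dist (f t) ap) : Tendsto f l (𝓝 am) := by
  rw [Metric.tendsto_nhds]
  intro ε hε
  obtain ⟨δ, hδ, h⟩ := near_wells hV hVpos R (lt_min hε hr)
  filter_upwards [h0.eventually_lt_const hδ, hfar] with t h1 h2
  rcases h (f t) (hR t) h1 with h3 | h3
  · exact h3.trans_le (min_le_left _ _)
  · have := h3.trans_le (min_le_right _ _)
    linarith

lemma lip_comp_tlu {N : ℕ} {G : Type*} [PseudoMetricSpace G] {W : Euc N → G} (hW : LocallyLipschitz W)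
    {R : ℝ} {f : ℕ → ℝ → Euc N} {g : ℝ → Euc N} (hf : ∀ n t, ‖f n t‖ ≤ R) (hg : ∀ t, ‖g t‖ ≤ R)
    (h : TendstoLocallyUniformly f g atTop) :
    TendstoLocallyUniformly (fun n t => W (f n t)) (fun t => W (g t)) atTop := by
  obtain ⟨K, hK⟩ := LocallyLipschitzOn.exists_lipschitzOnWith_of_compact
    (isCompact_closedBall (0 : Euc N) R) (hW.locallyLipschitzOn (s := closedBall (0 : Euc N) R))
  rw [Metric.tendstoLocallyUniformly_iff] at h ⊢
  intro ε hε x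
  obtain ⟨s, hs, hev⟩ := h (ε / (K + 1)) (by positivity) x
  refine ⟨s, hs, ?_⟩
  filter_upwards [hev] with n hn y hy
  have h1 := hK.dist_le_mul (g y) (by simpa using hg y) (f n y) (by simpa using hf n y)
  have h2 := hn y hy
  rw [lt_div_iff₀ (by positivity)] at h2
  have h3 : (0:ℝ) ≤ dist (g y) (f n y) := dist_nonneg
  nlinarith

lemma ode_const {N : ℕ} {W : Euc N → Euc N} (hW : LocallyLipschitz W) {R : ℝ}
    {q p : ℝ → Euc N} (hq : ∀ t, HasDerivAt q (p t) t) (hp : ∀ t, HasDerivAt p (W (q t)) t)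
    (hR : ∀ t, ‖q t‖ ≤ R) {a : Euc N} (hWa : W a = 0) {t₁ : ℝ} (h1 : q t₁ = a) (h2 : p t₁ = 0)
    (t : ℝ) : q t = a := by
  obtain ⟨K, hK⟩ := LocallyLipschitzOn.exists_lipschitzOnWith_of_compact
    (isCompact_closedBall (0 : Euc N) R) (hW.locallyLipschitzOn (s := closedBall (0 : Euc N) R))
  have haR : ‖a‖ ≤ R := h1 ▸ hR t₁
  let s : Set (Euc N × Euc N) := closedBall (0 : Euc N) R ×ˢ univ
  have hL : LipschitzOnWith (max 1 (K * 1)) (fun z : Euc N × Euc N => (z.2, W z.1)) s := by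
    refine LipschitzOnWith.prodMk (LipschitzWith.prod_snd.lipschitzOnWith) ?_
    exact hK.comp (LipschitzWith.prod_fst.lipschitzOnWith) (fun z hz => hz.1)
  have := ODE_solution_unique_univ (v := fun _ z => (z.2, W z.1)) (s := fun _ => s)
    (f := fun t => (q t, p t)) (g := fun _ => (a, 0)) (t₀ := t₁) (fun _ => hL)
    (fun t => ⟨(hq t).prodMk (hp t), by simpa using hR t, trivial⟩)
    (fun t => ⟨by simp only [hWa]; exact hasDerivAt_const t ((a, 0) : Euc N × Euc N),
      by simpa using haR, trivial⟩) (by simp [h1, h2])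
  have h3 := congrFun this t
  exact (Prod.ext_iff.1 h3).1

lemma near_alpha {N : ℕ} {Vm : Set (Euc N)} {am : Euc N} {d : ℝ} (hd : 0 < d) (ham : am ∈ Vm)
    (hbm : Vm ⊆ ball am (d / 4)) {q : ℝ → Euc N} {α : EReal} {s : ℝ} (hs : α < (s : EReal))
    (hbot : α = ⊥ → Tendsto (fun t => infDist (q t) Vm) atBot (𝓝 0))
    (hfin : ∀ a : ℝ, α = (a : EReal) → Tendsto (fun t => infDist (q t) Vm) (𝓝[>] a) (𝓝 0)) :
    ∃ t : ℝ, α < (t : EReal) ∧ t ≤ s ∧ dist (q t) am < d / 2 := by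
  have key : ∀ t, infDist (q t) Vm < d / 4 → dist (q t) am < d / 2 := by
    intro t ht
    obtain ⟨y, hy, hy'⟩ := (infDist_lt_iff ⟨am, ham⟩).1 ht
    have := hbm hy
    rw [mem_ball] at this
    have := dist_triangle (q t) y am
    linarith
  have hd4 : 0 < d / 4 := by linarith
  induction α with
  | bot =>
    obtain ⟨t, h1, h2⟩ := (((hbot rfl).eventually_lt_const hd4).and
      (eventually_le_atBot s)).exists
    exact ⟨t, EReal.bot_lt_coe t, h2, key t h1⟩
  | top => exact absurd hs (by simp)
  | coe a =>
    have has : a < s := by exact_mod_cast hs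
    obtain ⟨t, h1, h2⟩ := (((hfin a rfl).eventually_lt_const hd4).and
      (Ioo_mem_nhdsGT has)).exists
    exact ⟨t, by exact_mod_cast h2.1, h2.2.le, key t h1⟩

lemma near_omega {N : ℕ} {Vp : Set (Euc N)} {am ap : Euc N} (hne : am ≠ ap) (hap : ap ∈ Vp)
    (hbp : Vp ⊆ ball ap (dist am ap / 4)) {q : ℝ → Euc N} {ω : EReal} {s : ℝ}
    (hs : (s : EReal) < ω)
    (htop : ω = ⊤ → Tendsto (fun t => infDist (q t) Vp) atTop (𝓝 0))
    (hfin : ∀ b : ℝ, ω = (b : EReal) → Tendsto (fun t => infDist (q t) Vp) (𝓝[<] b) (𝓝 0)) :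
    ∃ b : ℝ, s ≤ b ∧ (b : EReal) < ω ∧
      ∀ t : ℝ, b ≤ t → (t : EReal) < ω → dist am ap / 2 < dist (q t) am := by
  have hd : 0 < dist am ap := dist_pos.2 hne
  have key : ∀ t, infDist (q t) Vp < dist am ap / 4 → dist am ap / 2 < dist (q t) am := by
    intro t ht
    obtain ⟨y, hy, hy'⟩ := (infDist_lt_iff ⟨ap, hap⟩).1 ht
    have := hbp hy
    rw [mem_ball] at this
    have h1 := dist_triangle (q t) y ap
    have h2 := dist_triangle_left am ap (q t)
    linarith
  have hd4 : 0 < dist am ap / 4 := by linarith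
  induction ω with
  | top =>
    obtain ⟨b, hb⟩ := eventually_atTop.1 ((htop rfl).eventually_lt_const hd4)
    exact ⟨max s b, le_max_left _ _, EReal.coe_lt_top _,
      fun t ht _ => key t (hb t ((le_max_right _ _).trans ht))⟩
  | bot => exact absurd hs (by simp)
  | coe w =>
    have hsw : s < w := by exact_mod_cast hs
    have h1 := (hfin w rfl).eventually_lt_const hd4
    obtain ⟨l, hl, hl'⟩ := mem_nhdsLT_iff_exists_Ico_subset.1 h1
    have hl2 : l < w := hl
    refine ⟨max s l, le_max_left _ _, by exact_mod_cast max_lt hsw hl2, fun t ht htw => ?_⟩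
    exact key t (hl' ⟨(le_max_right _ _).trans ht, by exact_mod_cast htw⟩)

lemma choose_time {N : ℕ} {Vm Vp : Set (Euc N)} {am ap : Euc N} (hne : am ≠ ap) (ham : am ∈ Vm)
    (hbm : Vm ⊆ ball am (dist am ap / 4)) (hap : ap ∈ Vp)
    (hbp : Vp ⊆ ball ap (dist am ap / 4)) {q : ℝ → Euc N} (hq : Continuous q) {α ω : EReal}
    (hαω : α < ω)
    (hbot : α = ⊥ → Tendsto (fun t => infDist (q t) Vm) atBot (𝓝 0))
    (hfin : ∀ a : ℝ, α = (a : EReal) → Tendsto (fun t => infDist (q t) Vm) (𝓝[>] a) (𝓝 0))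
    (htop : ω = ⊤ → Tendsto (fun t => infDist (q t) Vp) atTop (𝓝 0))
    (hfin' : ∀ b : ℝ, ω = (b : EReal) → Tendsto (fun t => infDist (q t) Vp) (𝓝[<] b) (𝓝 0)) :
    ∃ τ : ℝ, α < (τ : EReal) ∧ (τ : EReal) < ω ∧ dist (q τ) am = dist am ap / 2 ∧
      ∀ t : ℝ, τ < t → (t : EReal) < ω → dist am ap / 2 ≤ dist (q t) am := by
  have hd : 0 < dist am ap := dist_pos.2 hne
  obtain ⟨s, hs1, hs2⟩ := EReal.lt_iff_exists_real_btwn.1 hαω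
  obtain ⟨b, hb1, hb2, hb3⟩ := near_omega hne hap hbp hs2 htop hfin'
  obtain ⟨a, ha1, ha2, ha3⟩ := near_alpha hd ham hbm hs1 hbot hfin
  have hfc : Continuous (fun t => dist (q t) am) := by fun_prop
  obtain ⟨τ, hτ, hτ1, hτ2⟩ := last_exit hfc (ha2.trans hb1) ha3.le
  have hτb : τ < b := by
    rcases eq_or_lt_of_le hτ.2 with h | h
    · have := hb3 b le_rfl hb2
      rw [← h] at this
      linarith
    · exact h
  have hτ3 : ∀ t : ℝ, τ < t → (t : EReal) < ω → dist am ap / 2 ≤ dist (q t) am := by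
    intro t h1 h2
    rcases le_total t b with h | h
    · exact (hτ2 t h1 h).le
    · exact (hb3 t h h2).le
  refine ⟨τ, ha1.trans_le (by exact_mod_cast hτ.1), lt_trans (by exact_mod_cast hτb) hb2,
    le_antisymm hτ1 ?_, hτ3⟩
  refine ge_of_tendsto ((hfc.tendsto τ).mono_left (nhdsWithin_le_nhds (s := Ioi τ))) ?_
  filter_upwards [Ioo_mem_nhdsGT hτb] with t ht
  exact (hτ2 t ht.1 ht.2.le).le

lemma gradient_zero_of_min {N : ℕ} {V : Euc N → ℝ} {a : Euc N} (h : ∀ x, V a ≤ V x) :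
    gradient V a = 0 := by
  have : fderiv ℝ V a = 0 := IsLocalMin.fderiv_eq_zero (Eventually.of_forall h)
  simp [gradient, this]

/-- Proposition 3.2 (double-well convergence): as `c_n → 0⁺`, the connecting solutions with
energies `−c_n`, suitably translated and up to a subsequence, converge in `C²_loc` to a
heteroclinic solution between `a₋` and `a₊`. -/
theorem doublewell_convergence {N : ℕ} (hN : 0 < N) (V : Euc N → ℝ) (hV : ContDiff ℝ 1 V)
    (hlip : LocallyLipschitz (gradient V))
    (am ap : Euc N) (hne : am ≠ ap) (hVam : V am = 0) (hVap : V ap = 0)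
    (hVpos : ∀ x, x ≠ am → x ≠ ap → 0 < V x)
    (ν₀ : ℝ) (hν₀ : 0 < ν₀)
    (hliminf₁ : ∀ b : ℝ, b < ν₀ → ∃ ρ : ℝ, ∀ x : Euc N, ρ ≤ ‖x‖ → b < V x)
    (hliminf₂ : ∀ b : ℝ, ν₀ < b → ∀ ρ : ℝ, ∃ x : Euc N, ρ ≤ ‖x‖ ∧ V x < b)
    (cdw : ℝ) (hcdw0 : 0 < cdw) (hcdwν : cdw < ν₀)
    (Vm Vp : ℝ → Set (Euc N))
    (hsets : ∀ c : ℝ, 0 ≤ c → c < cdw →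
      IsCompact (Vm c) ∧ IsCompact (Vp c) ∧
      {x | V x ≤ c} = Vm c ∪ Vp c ∧ 0 < setDist (Vm c) (Vp c) ∧
      am ∈ Vm c ∧ Vm c ⊆ ball am (dist am ap / 4) ∧
      ap ∈ Vp c ∧ Vp c ⊆ ball ap (dist am ap / 4))
    (c : ℕ → ℝ) (hcpos : ∀ n, 0 < c n) (hclt : ∀ n, c n < cdw)
    (hc0 : Tendsto c atTop (𝓝 0))
    (q : ℕ → ℝ → Euc N)
    (hsol : ∀ n, ContDiff ℝ 2 (q n) ∧
      (∀ t, deriv (deriv (q n)) t = gradient V (q n t)) ∧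
      (∀ t, 2⁻¹ * ‖deriv (q n) t‖ ^ 2 - V (q n t) = -(c n)))
    (hconn : ∀ n, ∃ α ω : EReal, α < ω ∧
      (∀ t : ℝ, α < (t : EReal) → (t : EReal) < ω → c n < V (q n t)) ∧
      ((α = ⊥ → Tendsto (fun t => infDist (q n t) (Vm (c n))) atBot (𝓝 0)) ∧
       (∀ a : ℝ, α = (a : EReal) →
          Tendsto (fun t => infDist (q n t) (Vm (c n))) (𝓝[>] a) (𝓝 0) ∧
          deriv (q n) a = 0 ∧ V (q n a) = c n ∧ q n a ∈ Vm (c n))) ∧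
      ((ω = ⊤ → Tendsto (fun t => infDist (q n t) (Vp (c n))) atTop (𝓝 0)) ∧
       (∀ b : ℝ, ω = (b : EReal) →
          Tendsto (fun t => infDist (q n t) (Vp (c n))) (𝓝[<] b) (𝓝 0) ∧
          deriv (q n) b = 0 ∧ V (q n b) = c n ∧ q n b ∈ Vp (c n))) ∧
      lagJ V (c n) (q n) (deriv (q n)) {t : ℝ | α < (t : EReal) ∧ (t : EReal) < ω}
        = mc V (c n) (Vm (c n)) (Vp (c n)) ∧
      (∀ M : ℝ, (∀ t : ℝ, α < (t : EReal) → (t : EReal) < ω → ‖q n t‖ ≤ M) →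
        ∀ t : ℝ, ‖q n t‖ ≤ M)) :
    ∃ φ : ℕ → ℕ, StrictMono φ ∧ ∃ ζ : ℕ → ℝ, ∃ q₀ : ℝ → Euc N,
      ContDiff ℝ 2 q₀ ∧
      (∀ t, deriv (deriv q₀) t = gradient V (q₀ t)) ∧
      Tendsto q₀ atBot (𝓝 am) ∧ Tendsto q₀ atTop (𝓝 ap) ∧
      Tendsto (deriv q₀) atBot (𝓝 0) ∧ Tendsto (deriv q₀) atTop (𝓝 0) ∧
      TendstoLocallyUniformly (fun n t => q (φ n) (t - ζ n)) q₀ atTop ∧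
      TendstoLocallyUniformly (fun n t => deriv (q (φ n)) (t - ζ n)) (deriv q₀) atTop ∧
      TendstoLocallyUniformly (fun n t => deriv (deriv (q (φ n))) (t - ζ n))
        (deriv (deriv q₀)) atTop := by
    classical
  have hVc : Continuous V := hV.continuous
  have hVl : LocallyLipschitz V := hV.locallyLipschitz
  have hGc : Continuous (gradient V) := hlip.continuous
  have hV0 : ∀ x, 0 ≤ V x := by
    intro x
    by_cases h1 : x = am
    · rw [h1, hVam]
    by_cases h2 : x = ap
    · rw [h2, hVap]
    exact (hVpos x h1 h2).le
  have hd : 0 < dist am ap := dist_pos.2 hne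
  -- uniform bound of the minimal levels
  obtain ⟨K, hK⟩ : ∃ K, ∀ θ ∈ Icc (0 : ℝ) 1, V (am + θ • (ap - am)) ≤ K := by
    obtain ⟨K, hK⟩ := (isCompact_Icc (a := (0:ℝ)) (b := 1)).bddAbove_image
      (f := fun θ => V (am + θ • (ap - am))) (by fun_prop)
    exact ⟨K, fun θ hθ => hK ⟨θ, hθ, rfl⟩⟩
  have hK0 : 0 ≤ K := (hV0 _).trans (hK 0 (by simp))
  set M : ℝ := 2⁻¹ * ‖ap - am‖ ^ 2 + K with hMdef
  have hM0 : 0 ≤ M := by positivity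
  have hmc : ∀ n, mc V (c n) (Vm (c n)) (Vp (c n)) ≤ ENNReal.ofReal M := by
    intro n
    obtain ⟨s1, s2, s3, -, s5, s6, s7, s8⟩ := hsets (c n) (hcpos n).le (hclt n)
    exact mc_bound hVc (hcpos n).le s1.isClosed s2.isClosed s3 hne s5 s6 s7 s8 hK
  -- sup bound
  set h : ℝ := (ν₀ - cdw) / 2 with hh
  have hh0 : 0 < h := by rw [hh]; linarith
  obtain ⟨ρ₁, hρ₁⟩ := hliminf₁ (cdw + h) (by rw [hh]; linarith)
  set ρ : ℝ := max ρ₁ (‖am‖ + dist am ap / 2) with hρ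
  set R : ℝ := ρ + (1 + 1 / h) * M with hR
  have hqd : ∀ n t, HasDerivAt (q n) (deriv (q n) t) t := fun n t =>
    (((hsol n).1.differentiable (by norm_num)) t).hasDerivAt
  have hq1 : ∀ n, ContDiff ℝ 1 (deriv (q n)) := fun n =>
    (contDiff_succ_iff_deriv.1 (show ContDiff ℝ (1 + 1) (q n) from (hsol n).1)).2.2
  have hqc' : ∀ n, Continuous (deriv (q n)) := fun n => (hq1 n).continuous
  have hqc : ∀ n, Continuous (q n) := fun n => (hsol n).1.continuous
  have hqdd : ∀ n t, HasDerivAt (deriv (q n)) (gradient V (q n t)) t := fun n t => by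
    rw [← (hsol n).2.1 t]
    exact (((hq1 n).differentiable (by norm_num)) t).hasDerivAt
  have key : ∀ n, ∃ (α ω : EReal) (τ : ℝ), α < (τ : EReal) ∧ (τ : EReal) < ω ∧
      dist (q n τ) am = dist am ap / 2 ∧
      (∀ t : ℝ, τ < t → (t : EReal) < ω → dist am ap / 2 ≤ dist (q n t) am) ∧
      (∀ a : ℝ, α = (a : EReal) → V (q n a) = c n) ∧
      (∀ b : ℝ, ω = (b : EReal) → V (q n b) = c n) ∧
      lagJ V (c n) (q n) (deriv (q n)) {t : ℝ | α < (t : EReal) ∧ (t : EReal) < ω}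
        ≤ ENNReal.ofReal M ∧
      (∀ (s r K : ℝ), α < (s : EReal) → (s : EReal) < ω → r ≤ dist am ap / 2 →
        dist (q n s) ap ≤ r → (∀ x ∈ closedBall ap r, V x ≤ K) →
        lagJ V (c n) (q n) (deriv (q n))
          ({t : ℝ | α < (t : EReal) ∧ (t : EReal) < ω} ∩ Ioi s)
          ≤ ENNReal.ofReal (2⁻¹ * r ^ 2 + K)) ∧
      ∀ t, ‖q n t‖ ≤ R := by
    intro n
    obtain ⟨s1, s2, s3, -, s5, s6, s7, s8⟩ := hsets (c n) (hcpos n).le (hclt n)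
    obtain ⟨α, ω, hαω, hVq, ⟨hbot, hfin⟩, ⟨htop, hfin'⟩, hJ, hsup⟩ := hconn n
    obtain ⟨τ, h1, h2, h3, h4⟩ := choose_time hne s5 s6 s7 s8 (hqc n) hαω hbot
      (fun a ha => (hfin a ha).1) htop (fun b hb => (hfin' b hb).1)
    have hJM := hJ.le.trans (hmc n)
    refine ⟨α, ω, τ, h1, h2, h3, h4, fun a ha => (hfin a ha).2.2.1,
      fun b hb => (hfin' b hb).2.2.1, hJM, ?_, ?_⟩
    · intro s r K' hs1 hs2 hr hsr hK'
      exact cut hVc (hcpos n).le s2.isClosed s3 s6 s7 (hqd n) (hqc' n) hs1 hs2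
        (fun t ht1 ht2 => (hVq t ht1 ht2).le) hbot (fun a ha => (hfin a ha).2.2) hJ.le
        (ne_top_of_le_ne_top ENNReal.ofReal_ne_top (hmc n)) hr hsr hK'
    · refine hsup R fun t ht1 ht2 => ?_
      obtain ⟨t₀, ht0, ht0', ht0''⟩ := near_alpha hd s5 s6 ht1 hbot (fun a ha => (hfin a ha).1)
      refine sup_bound hVc (hqd n) (hqc' n) hM0 hh0 hJM ?_ ht0' ?_ ?_
      · intro x hx
        have := hρ₁ x ((le_max_left _ _).trans hx)
        linarith [hclt n]
      · intro u hu
        exact ⟨ht0.trans_le (by exact_mod_cast hu.1), lt_of_le_of_lt (by exact_mod_cast hu.2) ht2⟩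
      · refine le_trans ?_ (le_max_right _ _)
        have := norm_le_norm_add_norm_sub' (q n t₀) am
        rw [dist_eq_norm] at ht0''
        linarith
  choose α ω τ hα hω hτ hτ' hαV hωV hJ hcut hqR using key
  -- bounds on speed and acceleration
  obtain ⟨B, hB⟩ : ∃ B, ∀ x : Euc N, ‖x‖ ≤ R → V x ≤ B := by
    obtain ⟨B, hB⟩ := (isCompact_closedBall (0 : Euc N) R).bddAbove_image hVc.continuousOn
    exact ⟨B, fun x hx => hB ⟨x, by simpa using hx, rfl⟩⟩
  obtain ⟨G, hG⟩ : ∃ G, ∀ x : Euc N, ‖x‖ ≤ R → ‖gradient V x‖ ≤ G := by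
    obtain ⟨B, hB⟩ := (isCompact_closedBall (0 : Euc N) R).bddAbove_image hGc.norm.continuousOn
    exact ⟨B, fun x hx => hB ⟨x, by simpa using hx, rfl⟩⟩
  have hB0 : 0 ≤ B := (hV0 _).trans (hB _ (hqR 0 0))
  have hG0 : 0 ≤ G := (norm_nonneg _).trans (hG _ (hqR 0 0))
  set S : ℝ := B + 1 with hS
  have hqS : ∀ n t, ‖deriv (q n) t‖ ≤ S := by
    intro n t
    have h1 := (hsol n).2.2 t
    have h2 := hB _ (hqR n t)
    have h3 := hcpos n
    nlinarith [sq_nonneg (‖deriv (q n) t‖ - 1)]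
  set F : ℕ → ℝ → Euc N × Euc N := fun n t => (q n (t + τ n), deriv (q n) (t + τ n)) with hF
  have hFd : ∀ n t, HasDerivAt (F n) (deriv (q n) (t + τ n), gradient V (q n (t + τ n))) t :=
    fun n t => ((hqd n (t + τ n)).comp_add_const t (τ n)).prodMk
      ((hqdd n (t + τ n)).comp_add_const t (τ n))
  obtain ⟨φ, hφ, g, hg⟩ := ascoli_seq (Real.toNNReal (max S G)) (max R S) F
    (fun n => by
      refine lipschitzWith_of_nnnorm_deriv_le (fun t => (hFd n t).differentiableAt) fun t => ?_
      rw [(hFd n t).deriv, ← NNReal.coe_le_coe, coe_nnnorm,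
        Real.coe_toNNReal _ (hG0.trans (le_max_right _ _))]
      exact max_le_max (hqS n _) (hG _ (hqR n _)))
    (fun n t => max_le_max (hqR n _) (hqS n _))
  set q₀ : ℝ → Euc N := fun t => (g t).1 with hq₀
  set p₀ : ℝ → Euc N := fun t => (g t).2 with hp₀
  have hQ : TendstoLocallyUniformly (fun n t => q (φ n) (t + τ (φ n))) q₀ atTop :=
    uniformContinuous_fst.comp_tendstoLocallyUniformly hg
  have hP : TendstoLocallyUniformly (fun n t => deriv (q (φ n)) (t + τ (φ n))) p₀ atTop :=
    uniformContinuous_snd.comp_tendstoLocallyUniformly hg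
  have hQt : ∀ t, Tendsto (fun n => q (φ n) (t + τ (φ n))) atTop (𝓝 (q₀ t)) := fun t =>
    (tendstoLocallyUniformlyOn_univ.2 hQ).tendsto_at (mem_univ t)
  have hPt : ∀ t, Tendsto (fun n => deriv (q (φ n)) (t + τ (φ n))) atTop (𝓝 (p₀ t)) := fun t =>
    (tendstoLocallyUniformlyOn_univ.2 hP).tendsto_at (mem_univ t)
  have hq₀R : ∀ t, ‖q₀ t‖ ≤ R := fun t =>
    le_of_tendsto (hQt t).norm (Eventually.of_forall fun n => hqR _ _)
  have hp₀S : ∀ t, ‖p₀ t‖ ≤ S := fun t =>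
    le_of_tendsto (hPt t).norm (Eventually.of_forall fun n => hqS _ _)
  have hA : TendstoLocallyUniformly (fun n t => gradient V (q (φ n) (t + τ (φ n))))
      (fun t => gradient V (q₀ t)) atTop :=
    lip_comp_tlu hlip (fun n t => hqR (φ n) _) hq₀R hQ
  have hVQ : TendstoLocallyUniformly (fun n t => V (q (φ n) (t + τ (φ n))))
      (fun t => V (q₀ t)) atTop :=
    lip_comp_tlu hVl (fun n t => hqR (φ n) _) hq₀R hQ
  have hq₀d : ∀ t, HasDerivAt q₀ (p₀ t) t := fun t =>
    hasDerivAt_of_tendstoLocallyUniformlyOn isOpen_univ (tendstoLocallyUniformlyOn_univ.2 hP)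
      (Eventually.of_forall fun n x _ => (hqd (φ n) (x + τ (φ n))).comp_add_const x (τ (φ n)))
      (fun x _ => hQt x) (mem_univ t)
  have hp₀d : ∀ t, HasDerivAt p₀ (gradient V (q₀ t)) t := fun t =>
    hasDerivAt_of_tendstoLocallyUniformlyOn isOpen_univ (tendstoLocallyUniformlyOn_univ.2 hA)
      (Eventually.of_forall fun n x _ => (hqdd (φ n) (x + τ (φ n))).comp_add_const x (τ (φ n)))
      (fun x _ => hPt x) (mem_univ t)
  have hdq₀ : deriv q₀ = p₀ := funext fun t => (hq₀d t).deriv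
  have hdp₀ : deriv p₀ = fun t => gradient V (q₀ t) := funext fun t => (hp₀d t).deriv
  have hq₀c : Continuous q₀ := continuous_iff_continuousAt.2 fun t => (hq₀d t).continuousAt
  have hcφ : Tendsto (fun n => c (φ n)) atTop (𝓝 0) := hc0.comp hφ.tendsto_atTop
  have hen : ∀ t, ‖p₀ t‖ ^ 2 = 2 * V (q₀ t) := by
    intro t
    have h1 : Tendsto (fun n => 2⁻¹ * ‖deriv (q (φ n)) (t + τ (φ n))‖ ^ 2
        - V (q (φ n) (t + τ (φ n)))) atTop (𝓝 (2⁻¹ * ‖p₀ t‖ ^ 2 - V (q₀ t))) :=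
      (((hPt t).norm.pow 2).const_mul _).sub ((hVc.tendsto _).comp (hQt t))
    have h2 : Tendsto (fun n => 2⁻¹ * ‖deriv (q (φ n)) (t + τ (φ n))‖ ^ 2
        - V (q (φ n) (t + τ (φ n)))) atTop (𝓝 (-0)) := by
      simp_rw [fun n => (hsol (φ n)).2.2 (t + τ (φ n))]
      exact hcφ.neg
    have := tendsto_nhds_unique h1 h2
    linarith
  have hq₀0 : dist (q₀ 0) am = dist am ap / 2 := by
    refine tendsto_nhds_unique ((hQt 0).dist tendsto_const_nhds) ?_
    simp only [zero_add, hτ]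
    exact tendsto_const_nhds
  have hgm : gradient V am = 0 := gradient_zero_of_min fun x => by rw [hVam]; exact hV0 x
  have hgp : gradient V ap = 0 := gradient_zero_of_min fun x => by rw [hVap]; exact hV0 x
  have hpos : ∀ t, 0 < V (q₀ t) := by
    intro t
    have hp0 : V (q₀ t) = 0 → p₀ t = 0 := by
      intro h0
      have := hen t
      rw [h0, mul_zero] at this
      simpa using this
    apply hVpos
    · intro h1
      have := ode_const hlip hq₀d hp₀d hq₀R hgm h1 (hp0 (by rw [h1, hVam])) 0
      rw [this, dist_self] at hq₀0
      linarith
    · intro h1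
      have := ode_const hlip hq₀d hp₀d hq₀R hgp h1 (hp0 (by rw [h1, hVap])) 0
      rw [this, dist_comm] at hq₀0
      linarith
  -- uniform comparison on compact intervals
  have hU : ∀ T ε : ℝ, 0 < ε → ∀ᶠ n in atTop, ∀ t ∈ Icc (-T) T,
      V (q₀ t) ≤ V (q (φ n) (t + τ (φ n))) - c (φ n) + ε := by
    intro T ε hε
    have h1 := tendstoLocallyUniformly_iff_forall_isCompact.1 hVQ (Icc (-T) T) isCompact_Icc
    rw [Metric.tendstoUniformlyOn_iff] at h1
    filter_upwards [h1 (ε / 2) (by linarith), hcφ.eventually_lt_const (show 0 < ε / 2 by linarith)]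
      with n hn hcn t ht
    have := hn t ht
    rw [Real.dist_eq] at this
    have := (abs_lt.1 this).2
    linarith
  have hIn : ∀ T : ℝ, 0 ≤ T → ∀ᶠ n in atTop, ∀ t ∈ Icc (-T) T,
      α (φ n) < ((t + τ (φ n) : ℝ) : EReal) ∧ ((t + τ (φ n) : ℝ) : EReal) < ω (φ n) := by
    intro T hT
    obtain ⟨y, hy, hmin⟩ := (isCompact_Icc (a := -T) (b := T)).exists_isMinOn
      ⟨0, by simp [hT]⟩ (hVc.comp hq₀c).continuousOn
    filter_upwards [hU T (V (q₀ y) / 2) (by linarith [hpos y])] with n hn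
    have hgt : ∀ u ∈ Icc (-T) T, c (φ n) < V (q (φ n) (u + τ (φ n))) := by
      intro u hu
      have h1 := hn u hu
      have h2 : V (q₀ y) ≤ V (q₀ u) := hmin hu
      linarith [hpos y]
    intro t ht
    constructor
    · by_contra hcon
      rw [not_lt] at hcon
      have hlt := hα (φ n)
      have hne1 : α (φ n) ≠ ⊤ := fun hh => by rw [hh] at hlt; simp at hlt
      have hne2 : α (φ n) ≠ ⊥ := fun hh => by rw [hh] at hcon; simp at hcon
      obtain ⟨a, ha⟩ : ∃ a : ℝ, α (φ n) = (a : EReal) := ⟨_, (EReal.coe_toReal hne1 hne2).symm⟩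
      rw [ha] at hcon hlt
      have hcon' : t + τ (φ n) ≤ a := by exact_mod_cast hcon
      have hlt' : a < τ (φ n) := by exact_mod_cast hlt
      have h1 := hgt (a - τ (φ n)) ⟨by linarith [ht.1], by linarith⟩
      rw [sub_add_cancel, hαV _ a ha] at h1
      exact lt_irrefl _ h1
    · by_contra hcon
      rw [not_lt] at hcon
      have hlt := hω (φ n)
      have hne1 : ω (φ n) ≠ ⊤ := fun hh => by
        rw [hh] at hcon
        exact absurd hcon (not_le.2 (EReal.coe_lt_top _))
      have hne2 : ω (φ n) ≠ ⊥ := fun hh => by rw [hh] at hlt; simp at hlt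
      obtain ⟨a, ha⟩ : ∃ a : ℝ, ω (φ n) = (a : EReal) := ⟨_, (EReal.coe_toReal hne1 hne2).symm⟩
      rw [ha] at hcon hlt
      have hcon' : a ≤ t + τ (φ n) := by exact_mod_cast hcon
      have hlt' : τ (φ n) < a := by exact_mod_cast hlt
      have h1 := hgt (a - τ (φ n)) ⟨by linarith, by linarith [ht.2]⟩
      rw [sub_add_cancel, hωV _ a ha] at h1
      exact lt_irrefl _ h1
  -- lower bound of the action by the integral of the potential of the limit
  have hlow : ∀ a b ε : ℝ, a ≤ b → 0 < ε → ∀ᶠ n in atTop,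
      Ioc (a + τ (φ n)) (b + τ (φ n)) ⊆
        {t : ℝ | α (φ n) < (t : EReal) ∧ (t : EReal) < ω (φ n)} ∧
      ENNReal.ofReal ((∫ t in a..b, V (q₀ t)) - ε * (b - a)) ≤
        lagJ V (c (φ n)) (q (φ n)) (deriv (q (φ n))) (Ioc (a + τ (φ n)) (b + τ (φ n))) := by
    intro a b ε hab hε
    have hVqc : Continuous (fun t => V (q₀ t)) := hVc.comp hq₀c
    have hsubT : Icc a b ⊆ Icc (-(max |a| |b|)) (max |a| |b|) := by
      intro t ht
      refine ⟨?_, ?_⟩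
      · have := neg_abs_le a
        have := le_max_left |a| |b|
        linarith [ht.1]
      · have := le_abs_self b
        have := le_max_right |a| |b|
        linarith [ht.2]
    filter_upwards [hU (max |a| |b|) ε hε, hIn (max |a| |b|) (by positivity)] with n hn hin
    have hen' : ∀ u, V (q (φ n) u) - c (φ n) = 2⁻¹ * ‖deriv (q (φ n)) u‖ ^ 2 := by
      intro u
      linarith [(hsol (φ n)).2.2 u]
    constructor
    · intro u hu
      have := hin (u - τ (φ n)) (hsubT ⟨by linarith [hu.1], by linarith [hu.2]⟩)
      rw [sub_add_cancel] at this
      exact this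
    · refine le_trans (ENNReal.ofReal_le_ofReal ?_)
        (ofReal_integral_le_lagJ hVc (hqc _) (hqc' _) (by linarith) (fun u _ => ?_))
      · have hqcn := hqc (φ n)
        have hqcn' := hqc' (φ n)
        have e : ε * (b - a) = ∫ _t in a..b, ε := by
          rw [intervalIntegral.integral_const, smul_eq_mul, mul_comm]
        rw [e, ← intervalIntegral.integral_sub (hVqc.intervalIntegrable _ _)
          (continuous_const.intervalIntegrable _ _),
          ← intervalIntegral.integral_comp_add_right
            (fun u => 2⁻¹ * ‖deriv (q (φ n)) u‖ ^ 2 + (V (q (φ n) u) - c (φ n)))]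
        refine intervalIntegral.integral_mono_on hab
          ((hVqc.sub continuous_const).intervalIntegrable _ _)
          (Continuous.intervalIntegrable (by fun_prop) _ _) fun t ht => ?_
        have h1 := hn t (hsubT ht)
        have h2 : 0 ≤ 2⁻¹ * ‖deriv (q (φ n)) (t + τ (φ n))‖ ^ 2 := by positivity
        linarith
      · have : 0 ≤ 2⁻¹ * ‖deriv (q (φ n)) u‖ ^ 2 := by positivity
        linarith [hen' u]
  have hIntBound : ∀ a b : ℝ, a ≤ b → ∫ t in a..b, V (q₀ t) ≤ M + 1 := by
    intro a b hab
    obtain ⟨n, hn1, hn2⟩ := (hlow a b (1 / (b - a + 1)) hab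
      (by have : 0 < b - a + 1 := by linarith
          positivity)).exists
    have h1 := (ENNReal.ofReal_le_ofReal_iff hM0).1
      (hn2.trans ((lagJ_mono _ _ _ _ hn1).trans (hJ (φ n))))
    have h2 : 1 / (b - a + 1) * (b - a) ≤ 1 := by
      rw [one_div, inv_mul_eq_div, div_le_one (by linarith)]
      linarith
    linarith
  -- decay of the potential
  obtain ⟨L, hL⟩ := LocallyLipschitzOn.exists_lipschitzOnWith_of_compact
    (isCompact_closedBall (0 : Euc N) R) (hVl.locallyLipschitzOn (s := closedBall (0 : Euc N) R))
  have hq₀L : ∀ s t, ‖q₀ s - q₀ t‖ ≤ S * |s - t| := by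
    intro s t
    have := Convex.norm_image_sub_le_of_norm_hasDerivWithin_le (f := q₀) (f' := p₀) (C := S)
      (s := univ) (fun x _ => (hq₀d x).hasDerivWithinAt) (fun x _ => hp₀S x) convex_univ
      (mem_univ t) (mem_univ s)
    simpa using this
  have hVL : ∀ s t, |V (q₀ s) - V (q₀ t)| ≤ (L * S) * |s - t| := by
    intro s t
    have h1 := hL.dist_le_mul (q₀ s) (by simpa using hq₀R s) (q₀ t) (by simpa using hq₀R t)
    rw [Real.dist_eq, dist_eq_norm] at h1
    have h2 := mul_le_mul_of_nonneg_left (hq₀L s t) L.2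
    rw [mul_assoc]
    exact h1.trans h2
  have hVtop : Tendsto (fun t => V (q₀ t)) atTop (𝓝 0) :=
    barbalat (fun t => hV0 _) hVL (hVc.comp hq₀c) (fun T hT => hIntBound 0 T hT)
  have hVbot : Tendsto (fun t => V (q₀ t)) atBot (𝓝 0) := by
    have h1 : Tendsto (fun t => V (q₀ (-t))) atTop (𝓝 0) := by
      refine barbalat (M := M + 1) (fun t => hV0 _) (L := L * S) (fun s t => ?_)
        (hVc.comp (hq₀c.comp continuous_neg)) (fun T hT => ?_)
      · have := hVL (-s) (-t)
        rwa [show -s - -t = -(s - t) by ring, abs_neg] at this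
      · rw [intervalIntegral.integral_comp_neg (fun t => V (q₀ t))]
        exact hIntBound _ _ (by linarith)
    have := h1.comp tendsto_neg_atBot_atTop
    simpa [Function.comp_def] using this
  have hder : ∀ l : Filter ℝ, Tendsto (fun t => V (q₀ t)) l (𝓝 0) → Tendsto p₀ l (𝓝 0) := by
    intro l hl
    rw [tendsto_zero_iff_norm_tendsto_zero]
    have e : (fun t => ‖p₀ t‖) = fun t => √(2 * V (q₀ t)) := by
      ext t
      rw [← hen t, Real.sqrt_sq (norm_nonneg _)]
    rw [e]
    have := (Real.continuous_sqrt.tendsto _).comp (hl.const_mul 2)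
    simpa [Function.comp_def] using this
  -- limit at plus infinity
  have hfar : ∀ t, 0 < t → dist am ap / 2 ≤ dist (q₀ t) am := by
    intro t ht
    refine ge_of_tendsto ((hQt t).dist tendsto_const_nhds) ?_
    filter_upwards [hIn t ht.le] with n hn
    exact hτ' (φ n) _ (by linarith) (hn t ⟨by linarith, le_rfl⟩).2
  have hlimtop : Tendsto q₀ atTop (𝓝 ap) :=
    to_well hVc (fun x h1 h2 => hVpos x h2 h1) (by linarith : 0 < dist am ap / 2) hq₀R hVtop
      ((eventually_gt_atTop 0).mono hfar)
  -- limit at minus infinity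
  obtain ⟨y, hy, hymin⟩ := (isCompact_Icc (a := (-1 : ℝ)) (b := 0)).exists_isMinOn
    ⟨0, by simp⟩ (hVc.comp hq₀c).continuousOn
  set δ : ℝ := V (q₀ y) with hδ
  have hδ0 : 0 < δ := hpos y
  have hδint : δ ≤ ∫ t in (-1 : ℝ)..0, V (q₀ t) := by
    have : ∫ _t in (-1 : ℝ)..0, δ ≤ ∫ t in (-1 : ℝ)..0, V (q₀ t) :=
      intervalIntegral.integral_mono_on (by norm_num) (by simp)
        ((hVc.comp hq₀c).intervalIntegrable _ _) fun t ht => hymin ht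
    simpa using this
  obtain ⟨r₁, hr₁, hr₁'⟩ : ∃ r₁ > 0, ∀ x, dist x ap < r₁ → V x < δ / 8 := by
    have : ∀ᶠ x in 𝓝 ap, V x < δ / 8 :=
      (hVc.tendsto ap).eventually_lt_const (by rw [hVap]; linarith)
    obtain ⟨r₁, h1, h2⟩ := Metric.eventually_nhds_iff.1 this
    exact ⟨r₁, h1, fun x hx => h2 hx⟩
  set r : ℝ := min (min (r₁ / 2) (dist am ap / 2)) (min δ (1 / 4)) with hr
  have hr0 : 0 < r := by
    rw [hr]
    refine lt_min (lt_min (by linarith) (by linarith)) (lt_min hδ0 (by norm_num))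
  have hra : r ≤ r₁ / 2 := (min_le_left _ _).trans (min_le_left _ _)
  have hrb : r ≤ dist am ap / 2 := (min_le_left _ _).trans (min_le_right _ _)
  have hrc : r ≤ δ := (min_le_right _ _).trans (min_le_left _ _)
  have hrd : r ≤ 1 / 4 := (min_le_right _ _).trans (min_le_right _ _)
  have hfar' : ∀ t, t ≤ -1 → r ≤ dist (q₀ t) ap := by
    intro t ht
    by_contra hcon
    rw [not_le] at hcon
    have hev : ∀ᶠ n in atTop, dist (q (φ n) (t + τ (φ n))) ap < r :=
      ((hQt t).dist tendsto_const_nhds).eventually_lt_const hcon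
    obtain ⟨n, hn1, hn2, hn3, hn4⟩ := (hev.and ((hIn (-t) (by linarith)).and
      (hlow (-1) 0 (δ / 2) (by norm_num) (by linarith)))).exists
    have hi := hn2 t ⟨by linarith, by linarith⟩
    have h1 := hcut (φ n) (t + τ (φ n)) r (δ / 8) hi.1 hi.2 hrb hn1.le
      (fun x hx => (hr₁' x (by rw [mem_closedBall] at hx; linarith)).le)
    have h2 := hn4.trans ((lagJ_mono _ _ _ _ (subset_inter hn3 (fun u hu => ?_))).trans h1)
    · rw [ENNReal.ofReal_le_ofReal_iff (by positivity)] at h2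
      nlinarith
    · have := hu.1
      simp only [mem_Ioi]
      linarith
  have hlimbot : Tendsto q₀ atBot (𝓝 am) :=
    to_well hVc hVpos hr0 hq₀R hVbot ((eventually_le_atBot (-1)).mono hfar')
  refine ⟨φ, hφ, fun n => -τ (φ n), q₀, ?_, ?_, hlimbot, hlimtop, ?_, ?_, ?_, ?_, ?_⟩
  · refine (contDiff_succ_iff_deriv (n := 1)).2 ⟨fun t => (hq₀d t).differentiableAt, ?_, ?_⟩
    · intro hcon
      exact absurd hcon (by decide)
    · rw [hdq₀, contDiff_one_iff_deriv, hdp₀]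
      exact ⟨fun t => (hp₀d t).differentiableAt, hGc.comp hq₀c⟩
  · intro t
    rw [hdq₀, hdp₀]
  · rw [hdq₀]
    exact hder _ hVbot
  · rw [hdq₀]
    exact hder _ hVtop
  · simpa only [sub_neg_eq_add] using hQ
  · rw [hdq₀]
    simpa only [sub_neg_eq_add] using hP
  · rw [hdq₀, hdp₀]
    simpa only [sub_neg_eq_add, fun n t => (hsol n).2.1 t] using hA
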